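/- Let G be a finite r-regular graph with girth g, equipped with a random label assignment with probabilities (p₀,p), and let i be a nonnegative integer with 2i < g−3. Then the probabilities P(u ∈ W_i), P(u ∈ B_i), P(u ∈ W_i ∧ v ∈ W_i), P(u ∈ B_i ∧ v ∈ W_i) and P(u ∈ B_i ∧ v ∈ B_i) do not depend on the choice of the vertex u and of the neighbour v of u. Moreover, if w is a neighbour of u distinct from v, then P(v ∈ B_i ∧ u ∈ B_i ∧ w ∈ R_{≤i}) does not depend on the choice of u, v and w. -/

import Mathlib

open MeasureTheory ProbabilityTheory Filter Set

namespace InducedForest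

variable {V : Type*}

/-- Label `i` is *relevant* for vertex `v` (w.r.t. the label assignment `S`):
either `i = 0` and `0 ∈ S v`, or `i ∈ S v`, no `j < i` is relevant for `v`, and
there is a unique neighbour of `v` having a relevant label strictly smaller than `i`. -/
def Relevant (G : SimpleGraph V) (S : V → Set ℕ) (i : ℕ) : V → Prop :=
  Nat.strongRecOn i (fun i ih v =>
    (i = 0 ∧ 0 ∈ S v) ∨
    (i ∈ S v ∧ (∀ j, (h : j < i) → ¬ ih j h v) ∧
      (∃! u, G.Adj v u ∧ ∃ j, ∃ h : j < i, ih j h u)))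

/-- `v` has some relevant label `≤ l`, i.e. `v ∈ R_{≤ l}`. -/
def RelevantLe (G : SimpleGraph V) (S : V → Set ℕ) (l : ℕ) (v : V) : Prop :=
  ∃ i ≤ l, Relevant G S i v

inductive Colour | white | blue | orange | purple
deriving DecidableEq

open Classical in
/-- The colour of `u` at time `l`. -/
noncomputable def colourAt (G : SimpleGraph V) (S : V → Set ℕ) (l : ℕ) (u : V) : Colour :=
  if RelevantLe G S l u then Colour.purple
  else if ∀ v, G.Adj u v → ¬ RelevantLe G S l v then Colour.white
  else if ∃! v, G.Adj u v ∧ RelevantLe G S l v then Colour.blue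
  else Colour.orange

/-- The set `W_l` of white vertices at time `l`. -/
def White (G : SimpleGraph V) (S : V → Set ℕ) (l : ℕ) : Set V :=
  {u | ¬ RelevantLe G S l u ∧ ∀ v, G.Adj u v → ¬ RelevantLe G S l v}

/-- The set `B_l` of blue vertices at time `l`. -/
def Blue (G : SimpleGraph V) (S : V → Set ℕ) (l : ℕ) : Set V :=
  {u | ¬ RelevantLe G S l u ∧ ∃! v, G.Adj u v ∧ RelevantLe G S l v}
/-- The label assignment determined by a sample point `ω`. -/
def labels (ω : V → ℕ → Bool) : V → Set ℕ := fun v => {i | ω v i = true}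

/-- `μ` is the random label assignment with probabilities `(p₀, p)`: the events
`i ∈ S(v)` are mutually independent, and each has probability `p₀` if `i = 0`
and `p` if `i ≥ 1`. -/
def IsLabelMeasure (μ : Measure (V → ℕ → Bool)) (p₀ p : ℝ) : Prop :=
  IsProbabilityMeasure μ ∧
  iIndepSet (fun q : V × ℕ => {ω : V → ℕ → Bool | ω q.1 q.2 = true}) μ ∧
  ∀ (v : V) (i : ℕ), μ {ω | ω v i = true} = ENNReal.ofReal (if i = 0 then p₀ else p)

/-- Event that `u` is white at time `l`. -/
def WEv (G : SimpleGraph V) (l : ℕ) (u : V) : Set (V → ℕ → Bool) :=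
  {ω | u ∈ White G (labels ω) l}

/-- Event that `u` is blue at time `l`. -/
def BEv (G : SimpleGraph V) (l : ℕ) (u : V) : Set (V → ℕ → Bool) :=
  {ω | u ∈ Blue G (labels ω) l}

/-- Event that `u` has relevant label `i`, i.e. `u ∈ R_i`. -/
def REv (G : SimpleGraph V) (i : ℕ) (u : V) : Set (V → ℕ → Bool) :=
  {ω | Relevant G (labels ω) i u}

/-- Event that `u` has a relevant label `≤ l`, i.e. `u ∈ R_{≤ l}`. -/
def RLeEv (G : SimpleGraph V) (l : ℕ) (u : V) : Set (V → ℕ → Bool) :=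
  {ω | RelevantLe G (labels ω) l u}

/-- `G` is `r`-regular. -/
def IsRegular (G : SimpleGraph V) (r : ℕ) : Prop :=
  ∀ v : V, (G.neighborSet v).ncard = r

/-! ### Girth and paths -/

lemma path_eq_of_egirth {G : SimpleGraph V} {a b : V} (p q : G.Walk a b)
    (hp : p.IsPath) (hq : q.IsPath) (h : ((p.length + q.length : ℕ) : ℕ∞) < G.egirth) :
    p = q := by
  classical
  set H : SimpleGraph V := SimpleGraph.fromEdgeSet {e | e ∈ p.edges ∨ e ∈ q.edges} with hH
  have hHE : H.edgeSet ⊆ {e | e ∈ p.edges ∨ e ∈ q.edges} := by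
    rw [hH, SimpleGraph.edgeSet_fromEdgeSet]; exact Set.sdiff_subset
  have hmem : ∀ e, e ∈ G.edgeSet → (e ∈ p.edges ∨ e ∈ q.edges) → e ∈ H.edgeSet := by
    intro e he h'
    rw [hH, SimpleGraph.edgeSet_fromEdgeSet]
    exact ⟨h', fun hd => G.not_isDiag_of_mem_edgeSet he hd⟩
  have hG : ∀ e, e ∈ H.edgeSet → e ∈ G.edgeSet := by
    intro e he
    rcases hHE he with h' | h'
    · exact p.edges_subset_edgeSet h'
    · exact q.edges_subset_edgeSet h'
  have hac : H.IsAcyclic := by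
    intro c w hw
    have h1 := SimpleGraph.egirth_le_length
      (hw.transfer (H := G) (fun e he => hG e (w.edges_subset_edgeSet he)))
    rw [SimpleGraph.Walk.length_transfer] at h1
    have h2 : w.length ≤ p.length + q.length := by
      rw [← w.length_edges, ← p.length_edges, ← q.length_edges, ← List.length_append,
        ← List.toFinset_card_of_nodup hw.edges_nodup]
      refine le_trans (Finset.card_le_card ?_) (List.toFinset_card_le _)
      intro e he
      rw [List.mem_toFinset] at he ⊢
      exact List.mem_append.2 (hHE (w.edges_subset_edgeSet he))
    exact absurd (lt_of_le_of_lt (h1.trans (by exact_mod_cast h2)) h) (lt_irrefl _)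
  have hp1 : ∀ e ∈ p.edges, e ∈ H.edgeSet :=
    fun e he => hmem e (p.edges_subset_edgeSet he) (Or.inl he)
  have hq1 : ∀ e ∈ q.edges, e ∈ H.edgeSet :=
    fun e he => hmem e (q.edges_subset_edgeSet he) (Or.inr he)
  have := (hac.subsingleton_path a b).elim ⟨p.transfer H hp1, hp.transfer hp1⟩ ⟨q.transfer H hq1, hq.transfer hq1⟩
  have h3 : p.transfer H hp1 = q.transfer H hq1 := congrArg Subtype.val this
  apply SimpleGraph.Walk.ext_support
  rw [← SimpleGraph.Walk.support_transfer p hp1, h3, SimpleGraph.Walk.support_transfer]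

lemma last_eq {G : SimpleGraph V} {a x x' y : V} (p : G.Walk a x) (q : G.Walk a x')
    (hp : p.IsPath) (hq : q.IsPath) (hyp : y ∉ p.support) (hyq : y ∉ q.support)
    (hx : G.Adj x y) (hx' : G.Adj x' y)
    (h : ((p.length + q.length + 2 : ℕ) : ℕ∞) < G.egirth) : x = x' := by
  have := path_eq_of_egirth (p.concat hx) (q.concat hx') (hp.concat hyp hx) (hq.concat hyq hx')
    (by
      simp only [SimpleGraph.Walk.length_concat]
      convert h using 2; ring)
  rw [← SimpleGraph.Walk.penultimate_concat p hx, this, SimpleGraph.Walk.penultimate_concat]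

/-! ### Balls around an edge -/

/-- The ball of radius `k` around the pair `u, v`. -/
def EBall (G : SimpleGraph V) (u v : V) : ℕ → Set V
  | 0 => {u, v}
  | k + 1 => {y | y ∈ EBall G u v k ∨ ∃ x ∈ EBall G u v k, G.Adj x y}

lemma EBall_succ {G : SimpleGraph V} {u v : V} {k : ℕ} {y : V} :
    y ∈ EBall G u v (k + 1) ↔ y ∈ EBall G u v k ∨ ∃ x ∈ EBall G u v k, G.Adj x y := Iff.rfl

lemma EBall_zero {G : SimpleGraph V} {u v y : V} :
    y ∈ EBall G u v 0 ↔ y = u ∨ y = v := Iff.rfl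

lemma EBall_mono {G : SimpleGraph V} {u v : V} {k l : ℕ} (h : k ≤ l) :
    EBall G u v k ⊆ EBall G u v l := by
  induction h with
  | refl => exact subset_rfl
  | step _ ih => exact ih.trans (fun x hx => Or.inl hx)

lemma exists_path_near {G : SimpleGraph V} {u v : V} (k : ℕ) :
    ∀ x ∈ EBall G u v k, ∃ a, (a = u ∨ a = v) ∧ ∃ p : G.Walk a x, p.IsPath ∧ p.length ≤ k ∧
      ∀ z ∈ p.support, z ∈ EBall G u v k := by
  induction k with
  | zero =>
    intro x hx
    exact ⟨x, hx, SimpleGraph.Walk.nil, by simp, by simp, by simpa using hx⟩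
  | succ k ih =>
    intro y hy
    by_cases hyk : y ∈ EBall G u v k
    · obtain ⟨a, ha, p, hp, hl, hs⟩ := ih y hyk
      exact ⟨a, ha, p, hp, by omega, fun z hz => Or.inl (hs z hz)⟩
    · obtain hy | ⟨x, hx, hxy⟩ := EBall_succ.1 hy
      · exact absurd hy hyk
      obtain ⟨a, ha, p, hp, hl, hs⟩ := ih x hx
      refine ⟨a, ha, p.concat hxy, hp.concat (fun h => hyk (hs _ h)) hxy, by simpa using hl, ?_⟩
      intro z hz
      simp only [SimpleGraph.Walk.support_concat, List.mem_append,
        List.mem_singleton] at hz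
      rcases hz with h | h
      · exact Or.inl (hs z h)
      · exact h ▸ hy

lemma exists_path_far {G : SimpleGraph V} {u v : V} (huv : G.Adj u v) (k : ℕ) (x : V)
    (hx : x ∈ EBall G u v k) (b : V) (hb : b = u ∨ b = v) :
    ∃ p : G.Walk b x, p.IsPath ∧ p.length ≤ k + 1 ∧ ∀ z ∈ p.support, z ∈ EBall G u v k := by
  classical
  obtain ⟨a, ha, p, hp, hl, hs⟩ := exists_path_near k x hx
  by_cases hab : b = a
  · subst hab
    exact ⟨p, hp, by omega, hs⟩
  · have hadj : G.Adj b a := by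
      rcases ha with rfl | rfl <;> rcases hb with rfl | rfl
      · exact absurd rfl hab
      · exact huv.symm
      · exact huv
      · exact absurd rfl hab
    refine ⟨(SimpleGraph.Walk.cons hadj p).bypass, SimpleGraph.Walk.bypass_isPath _, ?_, ?_⟩
    · refine (SimpleGraph.Walk.length_bypass_le_length _).trans ?_
      simpa using hl
    · intro z hz
      have := SimpleGraph.Walk.support_bypass_subset_support _ hz
      rw [SimpleGraph.Walk.support_cons, List.mem_cons] at this
      rcases this with rfl | h
      · exact EBall_mono (Nat.zero_le k) hb
      · exact hs z h

lemma parent_unique {G : SimpleGraph V} {u v : V} (huv : G.Adj u v) {k : ℕ} {x x' y : V}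
    (hg : ((2 * k + 4 : ℕ) : ℕ∞) ≤ G.egirth)
    (hx : x ∈ EBall G u v k) (hx' : x' ∈ EBall G u v k) (hy : y ∉ EBall G u v k)
    (hxy : G.Adj x y) (hxy' : G.Adj x' y) : x = x' := by
  obtain ⟨a, ha, p, hp, hl, hs⟩ := exists_path_near k x hx
  obtain ⟨q, hq, hl', hs'⟩ := exists_path_far huv k x' hx' a ha
  refine last_eq p q hp hq (fun h => hy (hs _ h)) (fun h => hy (hs' _ h)) hxy hxy' ?_
  refine lt_of_lt_of_le ?_ hg
  exact_mod_cast (by omega : p.length + q.length + 2 < 2 * k + 4)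

lemma no_edge_in_sphere {G : SimpleGraph V} {u v : V} (huv : G.Adj u v) {k : ℕ} {x y : V}
    (hg : ((2 * k + 5 : ℕ) : ℕ∞) ≤ G.egirth)
    (hx : x ∈ EBall G u v (k + 1)) (hx' : x ∉ EBall G u v k)
    (hy : y ∈ EBall G u v (k + 1)) (hy' : y ∉ EBall G u v k) : ¬ G.Adj x y := by
  intro hxy
  obtain hx | ⟨x₀, hx₀, hxx⟩ := EBall_succ.1 hx
  · exact hx' hx
  obtain hy | ⟨y₀, hy₀, hyy⟩ := EBall_succ.1 hy
  · exact hy' hy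
  obtain ⟨a, ha, p, hp, hl, hs⟩ := exists_path_near k x₀ hx₀
  obtain ⟨q, hq, hl', hs'⟩ := exists_path_far huv k y₀ hy₀ a ha
  have hxp : x ∉ p.support := fun h => hx' (hs _ h)
  have := last_eq (p.concat hxx) q (hp.concat hxp hxx) hq ?_ (fun h => hy' (hs' _ h)) hxy hyy ?_
  · exact hx' (this ▸ hy₀)
  · intro h
    simp only [SimpleGraph.Walk.support_concat, List.mem_append,
      List.mem_singleton] at h
    rcases h with h | h
    · exact hy' (hs _ h)
    · exact hxy.ne h.symm
  · refine lt_of_lt_of_le ?_ hg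
    rw [SimpleGraph.Walk.length_concat]
    exact_mod_cast (by omega : p.length + 1 + q.length + 2 < 2 * k + 5)

/-! ### Building the local isomorphism -/

lemma adj_iff_of_forward [Fintype V] {r : ℕ} {G : SimpleGraph V} (hreg : IsRegular G r)
    (σ : Equiv.Perm V) {x : V} (h : ∀ y, G.Adj x y → G.Adj (σ x) (σ y)) (y : V) :
    G.Adj x y ↔ G.Adj (σ x) (σ y) := by
  refine ⟨h y, fun hy => ?_⟩
  have hsub : σ '' G.neighborSet x ⊆ G.neighborSet (σ x) := by
    rintro _ ⟨z, hz, rfl⟩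
    exact h z hz
  have heq : σ '' G.neighborSet x = G.neighborSet (σ x) := by
    apply Set.eq_of_subset_of_ncard_le hsub _ (Set.toFinite _)
    rw [Set.ncard_image_of_injective _ σ.injective, hreg, hreg]
  have : σ y ∈ σ '' G.neighborSet x := by rw [heq]; exact hy
  obtain ⟨z, hz, hzy⟩ := this
  rw [← σ.injective hzy]
  exact hz

lemma perm_extend [Fintype V] (s : Set V) (f : V → V) (hf : Set.InjOn f s) :
    ∃ σ : Equiv.Perm V, ∀ x ∈ s, σ x = f x := by
  classical
  obtain ⟨g, hg⟩ := Set.MapsTo.exists_equiv_extend_of_card_eq (t := Finset.univ) (s := s) (f := f)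
    (by simp) (by intro x _; simp) hf
  refine ⟨g.trans (Equiv.subtypeUnivEquiv (by simp)), fun x hx => ?_⟩
  simpa using hg x hx

lemma nbr_extend [Fintype V] {r : ℕ} {G : SimpleGraph V} (hreg : IsRegular G r)
    (σ : Equiv.Perm V) (x : V) :
    ∃ e : V → V, Set.InjOn e (G.neighborSet x) ∧ (∀ y, G.Adj x y → G.Adj (σ x) (e y)) ∧
      ∀ y, G.Adj x y → G.Adj (σ x) (σ y) → e y = σ y := by
  classical
  obtain ⟨g, hg⟩ := Set.MapsTo.exists_equiv_extend_of_card_eq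
    (α := G.neighborSet x) (t := (G.neighborSet (σ x)).toFinset)
    (s := {y | G.Adj (σ x) (σ y)}) (f := fun y => σ y)
    (by
      have h1 := hreg x
      have h2 := hreg (σ x)
      rw [Set.ncard_eq_toFinset_card'] at h1 h2
      rw [h2, ← h1, Set.toFinset_card])
    (by intro y hy; simpa using hy)
    (by intro a _ b _ hab; exact Subtype.ext (σ.injective hab))
  refine ⟨fun y => if h : G.Adj x y then (g ⟨y, h⟩ : V) else y, ?_, ?_, ?_⟩
  · intro a ha b hb hab
    have ha' : G.Adj x a := ha
    have hb' : G.Adj x b := hb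
    simp only [ha', hb', dif_pos] at hab
    have := g.injective (Subtype.ext hab)
    exact congrArg Subtype.val this
  · intro y hy
    simp only [hy, dif_pos]
    have := (g ⟨y, hy⟩).2
    exact Set.mem_toFinset.1 this
  · intro y hy hy'
    simp only [hy, dif_pos]
    exact (hg ⟨y, hy⟩ hy' : _)

/-- `σ` is a local isomorphism up to depth `k`. -/
def LocIso (G : SimpleGraph V) (u v w u' v' w' : V) (k : ℕ) (σ : Equiv.Perm V) : Prop :=
  σ u = u' ∧ σ v = v' ∧ σ w = w' ∧
    ∀ j < k, ∀ x ∈ EBall G u v j, ∀ y, G.Adj x y ↔ G.Adj (σ x) (σ y)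

lemma LocIso.mem_iff {G : SimpleGraph V} {u v w u' v' w' : V} {k : ℕ} {σ : Equiv.Perm V}
    (h : LocIso G u v w u' v' w' k σ) (j : ℕ) (hj : j ≤ k) :
    ∀ x, x ∈ EBall G u v j ↔ σ x ∈ EBall G u' v' j := by
  obtain ⟨hu, hv, -, hadj⟩ := h
  induction j with
  | zero =>
    intro x
    rw [EBall_zero, EBall_zero, ← hu, ← hv, σ.injective.eq_iff, σ.injective.eq_iff]
  | succ j ih =>
    intro y
    have ih := ih (by omega)
    rw [EBall_succ, EBall_succ, ← ih y]
    refine or_congr Iff.rfl ⟨?_, ?_⟩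
    · rintro ⟨x, hx, hxy⟩
      exact ⟨σ x, (ih x).1 hx, (hadj j (by omega) x hx y).1 hxy⟩
    · rintro ⟨x, hx, hxy⟩
      obtain ⟨x, rfl⟩ := σ.surjective x
      have hx' := (ih x).2 hx
      exact ⟨x, hx', (hadj j (by omega) x hx' y).2 hxy⟩

lemma LocIso.adj_iff {G : SimpleGraph V} {u v w u' v' w' : V} {k : ℕ} {σ : Equiv.Perm V}
    (huv : G.Adj u v) (huv' : G.Adj u' v') (hg : ((2 * k + 4 : ℕ) : ℕ∞) ≤ G.egirth)
    (h : LocIso G u v w u' v' w' k σ) {x y : V} (hx : x ∈ EBall G u v k)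
    (hy : y ∈ EBall G u v k) : G.Adj x y ↔ G.Adj (σ x) (σ y) := by
  have hm := h.mem_iff
  obtain ⟨hu, hv, -, hadj⟩ := h
  cases k with
  | zero =>
    rcases hx with rfl | rfl <;> rcases hy with rfl | rfl
    · simp
    · rw [hu, hv]; exact ⟨fun _ => huv', fun _ => huv⟩
    · rw [hu, hv]; exact ⟨fun _ => huv'.symm, fun _ => huv.symm⟩
    · simp
  | succ k =>
    by_cases hx' : x ∈ EBall G u v k
    · exact hadj k (by omega) x hx' y
    by_cases hy' : y ∈ EBall G u v k
    · rw [G.adj_comm, G.adj_comm (σ x)]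
      exact hadj k (by omega) y hy' x
    have hg' : ((2 * k + 5 : ℕ) : ℕ∞) ≤ G.egirth :=
      le_trans (by exact_mod_cast (by omega : 2 * k + 5 ≤ 2 * (k + 1) + 4)) hg
    have h1 := no_edge_in_sphere huv hg' hx hx' hy hy'
    have h2 := no_edge_in_sphere huv' hg' ((hm _ le_rfl _).1 hx)
      (fun h => hx' ((hm k (by omega) _).2 h)) ((hm _ le_rfl _).1 hy)
      (fun h => hy' ((hm k (by omega) _).2 h))
    exact ⟨fun h => absurd h h1, fun h => absurd h h2⟩

lemma LocIso.step [Fintype V] {r : ℕ} {G : SimpleGraph V} (hreg : IsRegular G r)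
    {u v w u' v' w' : V} {k : ℕ} {σ : Equiv.Perm V}
    (huv : G.Adj u v) (huv' : G.Adj u' v') (huw : G.Adj u w) (huw' : G.Adj u' w')
    (hg : ((2 * k + 4 : ℕ) : ℕ∞) ≤ G.egirth)
    (h : LocIso G u v w u' v' w' k σ) : ∃ σ', LocIso G u v w u' v' w' (k + 1) σ' := by
  classical
  have hm := h.mem_iff
  have hin : ∀ {x y}, x ∈ EBall G u v k → y ∈ EBall G u v k →
    (G.Adj x y ↔ G.Adj (σ x) (σ y)) := fun hx hy => h.adj_iff huv huv' hg hx hy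
  obtain ⟨hu, hv, hw, hadj⟩ := h
  choose e he1 he2 he3 using nbr_extend hreg σ
  have hpar : ∀ y, ∃ x, y ∈ EBall G u v (k + 1) → y ∉ EBall G u v k →
      x ∈ EBall G u v k ∧ G.Adj x y := by
    intro y
    by_cases hy : y ∈ EBall G u v (k + 1) ∧ y ∉ EBall G u v k
    · obtain h | ⟨x, hx⟩ := EBall_succ.1 hy.1
      · exact absurd h hy.2
      · exact ⟨x, fun _ _ => hx⟩
    · exact ⟨y, fun h1 h2 => absurd ⟨h1, h2⟩ hy⟩
  choose par hpar using hpar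
  set f : V → V := fun y => if y ∈ EBall G u v k then σ y else e (par y) y with hf
  have hfin : ∀ y, y ∈ EBall G u v k → f y = σ y := fun y hy => by simp [hf, hy]
  have hfout : ∀ y, y ∉ EBall G u v k → f y = e (par y) y := fun y hy => by simp [hf, hy]
  have hnot : ∀ y ∈ EBall G u v (k + 1), y ∉ EBall G u v k → f y ∉ EBall G u' v' k := by
    intro y hy hy' hfy
    obtain ⟨hx, hxy⟩ := hpar y hy hy'
    obtain ⟨z, hz⟩ := σ.surjective (f y)
    rw [← hz] at hfy
    have hzk := (hm k le_rfl z).2 hfy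
    have h1 : G.Adj (σ (par y)) (σ z) := by
      rw [hz, hfout y hy']; exact he2 _ _ hxy
    have h2 : G.Adj (par y) z := (hin hx hzk).2 h1
    have h3 := he3 _ _ h2 h1
    rw [hz, hfout y hy'] at h3
    exact hy' (he1 _ h2 hxy h3 ▸ hzk)
  have hinj : Set.InjOn f (EBall G u v (k + 1)) := by
    intro y hy y' hy' hyy
    by_cases hk : y ∈ EBall G u v k <;> by_cases hk' : y' ∈ EBall G u v k
    · rw [hfin _ hk, hfin _ hk'] at hyy
      exact σ.injective hyy
    · exact absurd (by rw [← hyy, hfin _ hk]; exact (hm k le_rfl y).1 hk) (hnot y' hy' hk')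
    · exact absurd (by rw [hyy, hfin _ hk']; exact (hm k le_rfl y').1 hk') (hnot y hy hk)
    · obtain ⟨hx, hxy⟩ := hpar y hy hk
      obtain ⟨hx', hxy'⟩ := hpar y' hy' hk'
      have h1 : G.Adj (σ (par y)) (f y) := by rw [hfout y hk]; exact he2 _ _ hxy
      have h2 : G.Adj (σ (par y')) (f y) := by rw [hyy, hfout y' hk']; exact he2 _ _ hxy'
      have h3 := σ.injective (parent_unique huv' hg ((hm k le_rfl _).1 hx) ((hm k le_rfl _).1 hx')
        (hnot y hy hk) h1 h2)
      rw [hfout _ hk, hfout _ hk', ← h3] at hyy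
      rw [← h3] at hxy'
      exact he1 _ hxy hxy' hyy
  obtain ⟨σ', hσ'⟩ := perm_extend _ f hinj
  have hk1 : ∀ x ∈ EBall G u v k, σ' x = σ x := fun x hx => by
    rw [hσ' x (Or.inl hx), hfin x hx]
  have hu0 : u ∈ EBall G u v k := EBall_mono (Nat.zero_le k) (Or.inl rfl)
  have hv0 : v ∈ EBall G u v k := EBall_mono (Nat.zero_le k) (Or.inr rfl)
  have hw1 : w ∈ EBall G u v (k + 1) := Or.inr ⟨u, hu0, huw⟩
  refine ⟨σ', by rw [hk1 _ hu0, hu], by rw [hk1 _ hv0, hv], ?_, ?_⟩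
  · by_cases hwk : w ∈ EBall G u v k
    · rw [hk1 _ hwk, hw]
    · obtain ⟨hx, hxy⟩ := hpar w hw1 hwk
      have hpu := parent_unique huv hg hx hu0 hwk hxy huw
      rw [hσ' w hw1, hfout w hwk, hpu, he3 _ _ huw (by rw [hu, hw]; exact huw'), hw]
  · intro j hj x hx y
    have hxk : x ∈ EBall G u v k := EBall_mono (by omega) hx
    refine adj_iff_of_forward hreg σ' (fun y hxy => ?_) y
    rw [hk1 x hxk]
    by_cases hyk : y ∈ EBall G u v k
    · rw [hk1 y hyk]
      exact (hin hxk hyk).1 hxy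
    · have hy1 : y ∈ EBall G u v (k + 1) := Or.inr ⟨x, hxk, hxy⟩
      obtain ⟨hx', hxy'⟩ := hpar y hy1 hyk
      have hpx := parent_unique huv hg hx' hxk hyk hxy' hxy
      rw [hσ' y hy1, hfout y hyk, hpx]
      exact he2 _ _ hxy

lemma exists_locIso [Fintype V] {r : ℕ} {G : SimpleGraph V} (hreg : IsRegular G r)
    {u v w u' v' w' : V} (huv : G.Adj u v) (huv' : G.Adj u' v') (huw : G.Adj u w)
    (huw' : G.Adj u' w') (hvw : v = w ↔ v' = w') (k : ℕ)
    (hg : ((2 * k + 2 : ℕ) : ℕ∞) ≤ G.egirth) : ∃ σ, LocIso G u v w u' v' w' k σ := by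
  classical
  induction k with
  | zero =>
    have n1 := huv.ne
    have n2 := huv'.ne
    have n3 := huw.ne
    have n4 := huw'.ne
    obtain ⟨σ, hσ⟩ := perm_extend {u, v, w}
      (fun x => if x = u then u' else if x = v then v' else w') (by
        intro a ha b hb hab
        simp only [Set.mem_insert_iff, Set.mem_singleton_iff] at ha hb
        grind)
    refine ⟨σ, ?_, ?_, ?_, by simp⟩
    · rw [hσ u (by simp)]; simp
    · rw [hσ v (by simp)]; grind
    · rw [hσ w (by simp)]; grind
  | succ k ih =>
    obtain ⟨σ, hσ⟩ := ih (le_trans (by exact_mod_cast (by omega)) hg)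
    exact hσ.step hreg huv huv' huw huw' (le_trans (by exact_mod_cast (by omega)) hg)

/-! ### Transfer of relevance -/

lemma relevant_iff (G : SimpleGraph V) (S : V → Set ℕ) (i : ℕ) (v : V) :
    Relevant G S i v ↔ (i = 0 ∧ 0 ∈ S v) ∨
      (i ∈ S v ∧ (∀ j, j < i → ¬ Relevant G S j v) ∧
        (∃! u, G.Adj v u ∧ ∃ j, ∃ _ : j < i, Relevant G S j u)) := by
  conv_lhs => unfold Relevant
  rw [Nat.strongRecOn_eq]
  rfl

lemma existsUnique_perm (σ : Equiv.Perm V) {P Q : V → Prop} (h : ∀ x, P x ↔ Q (σ x)) :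
    (∃! x, P x) ↔ ∃! x, Q x := by
  constructor
  · rintro ⟨x, hx, hx'⟩
    refine ⟨σ x, (h x).1 hx, fun y hy => ?_⟩
    obtain ⟨y, rfl⟩ := σ.surjective y
    rw [hx' y ((h y).2 hy)]
  · rintro ⟨x, hx, hx'⟩
    obtain ⟨x, rfl⟩ := σ.surjective x
    exact ⟨x, (h x).2 hx, fun y hy => σ.injective (hx' _ ((h y).1 hy))⟩

lemma relevant_transfer {G : SimpleGraph V} {u v w u' v' w' : V} {n : ℕ} {σ : Equiv.Perm V}
    (h : LocIso G u v w u' v' w' n σ) (S : V → Set ℕ) (j : ℕ) :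
    ∀ d x, x ∈ EBall G u v d → d + j ≤ n →
      (Relevant G (fun y => S (σ y)) j x ↔ Relevant G S j (σ x)) := by
  induction j using Nat.strong_induction_on with
  | _ j ih =>
    intro d x hx hd
    rw [relevant_iff, relevant_iff]
    refine or_congr Iff.rfl (and_congr Iff.rfl (and_congr ?_ ?_))
    · exact forall_congr' fun k => forall_congr' fun hk =>
        not_congr (ih k hk d x hx (by omega))
    · refine existsUnique_perm σ fun y => ?_
      rcases Nat.eq_zero_or_pos j with rfl | hj
      · simp
      rw [← h.2.2.2 d (by omega) x hx y]
      refine and_congr_right fun hxy => ?_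
      exact exists_congr fun k => exists_congr fun hk =>
        ih k hk (d + 1) y (Or.inr ⟨x, hx, hxy⟩) (by omega)

lemma relevantLe_transfer {G : SimpleGraph V} {u v w u' v' w' : V} {i : ℕ} {σ : Equiv.Perm V}
    (h : LocIso G u v w u' v' w' (i + 1) σ) (S : V → Set ℕ) (x : V) (hx : x ∈ EBall G u v 1) :
    RelevantLe G (fun y => S (σ y)) i x ↔ RelevantLe G S i (σ x) :=
  exists_congr fun j => and_congr_right fun hj =>
    relevant_transfer h S j 1 x hx (by omega)

lemma white_transfer {G : SimpleGraph V} {u v w u' v' w' : V} {i : ℕ} {σ : Equiv.Perm V}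
    (h : LocIso G u v w u' v' w' (i + 1) σ) (S : V → Set ℕ) (x : V) (hx : x ∈ EBall G u v 0) :
    x ∈ White G (fun y => S (σ y)) i ↔ σ x ∈ White G S i := by
  refine and_congr (not_congr (relevantLe_transfer h S x (Or.inl hx))) ?_
  rw [← σ.forall_congr_right (q := fun y => G.Adj (σ x) y → ¬ RelevantLe G S i y)]
  refine forall_congr' fun y => ?_
  rw [← h.2.2.2 0 (by omega) x hx y]
  exact forall_congr' fun hxy =>
    not_congr (relevantLe_transfer h S y (Or.inr ⟨x, hx, hxy⟩))

lemma blue_transfer {G : SimpleGraph V} {u v w u' v' w' : V} {i : ℕ} {σ : Equiv.Perm V}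
    (h : LocIso G u v w u' v' w' (i + 1) σ) (S : V → Set ℕ) (x : V) (hx : x ∈ EBall G u v 0) :
    x ∈ Blue G (fun y => S (σ y)) i ↔ σ x ∈ Blue G S i := by
  refine and_congr (not_congr (relevantLe_transfer h S x (Or.inl hx))) ?_
  refine existsUnique_perm σ fun y => ?_
  rw [← h.2.2.2 0 (by omega) x hx y]
  exact and_congr_right fun hxy => relevantLe_transfer h S y (Or.inr ⟨x, hx, hxy⟩)

/-! ### Invariance of the measure -/

/-- Relabelling of the vertices, as a measurable equivalence of sample spaces. -/
def permEquiv (σ : Equiv.Perm V) : (V → ℕ → Bool) ≃ᵐ (V → ℕ → Bool) where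
  toFun ω := fun v => ω (σ v)
  invFun ω := fun v => ω (σ.symm v)
  left_inv ω := by ext; simp
  right_inv ω := by ext; simp
  measurable_toFun := measurable_pi_lambda _ fun v => measurable_pi_apply (σ v)
  measurable_invFun := measurable_pi_lambda _ fun v => measurable_pi_apply (σ.symm v)

lemma pi_le_of_coord (m : MeasurableSpace (V → ℕ → Bool))
    (h : ∀ q : V × ℕ, MeasurableSet[m] {ω : V → ℕ → Bool | ω q.1 q.2 = true}) :
    (MeasurableSpace.pi : MeasurableSpace (V → ℕ → Bool)) ≤ m := by
  have hid : Measurable[m, MeasurableSpace.pi] (fun ω : V → ℕ → Bool => ω) := by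
    refine measurable_pi_iff.2 fun v => measurable_pi_iff.2 fun i => ?_
    exact measurable_to_bool (h (v, i))
  intro s hs
  exact hid hs

lemma map_permEquiv {μ : Measure (V → ℕ → Bool)} {p₀ p : ℝ} (hμ : IsLabelMeasure μ p₀ p)
    (σ : Equiv.Perm V) : μ.map (permEquiv σ) = μ := by
  classical
  obtain ⟨hprob, hind, hval⟩ := hμ
  set A : V × ℕ → Set (V → ℕ → Bool) := fun q => {ω | ω q.1 q.2 = true} with hA
  have hAm : ∀ q, MeasurableSet (A q) := fun q =>
    measurableSet_eq_fun ((measurable_pi_apply q.2).comp (measurable_pi_apply q.1))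
      measurable_const
  symm
  refine ext_of_generate_finite (range fun s : Finset (V × ℕ) => ⋂ q ∈ s, A q) ?_ ?_ ?_ ?_
  · apply le_antisymm
    · set m := MeasurableSpace.generateFrom (range fun s : Finset (V × ℕ) => ⋂ q ∈ s, A q) with hm
      have hAm' : ∀ q, MeasurableSet[m] (A q) := fun q =>
        MeasurableSpace.measurableSet_generateFrom ⟨{q}, by simp⟩
      exact pi_le_of_coord m hAm'
    · refine MeasurableSpace.generateFrom_le ?_
      rintro _ ⟨s, rfl⟩
      exact Finset.measurableSet_biInter s fun q _ => hAm q
  · rintro _ ⟨s, rfl⟩ _ ⟨t, rfl⟩ -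
    refine ⟨s ∪ t, ?_⟩
    ext ω
    simp only [Set.mem_iInter, Set.mem_inter_iff, Finset.mem_union]
    constructor
    · exact fun h => ⟨fun q hq => h q (Or.inl hq), fun q hq => h q (Or.inr hq)⟩
    · rintro ⟨h1, h2⟩ q (hq | hq)
      exacts [h1 q hq, h2 q hq]
  · rintro _ ⟨s, rfl⟩
    rw [MeasurableEquiv.map_apply]
    set τ : V × ℕ ↪ V × ℕ := (Equiv.prodCongr σ (Equiv.refl ℕ)).toEmbedding with hτ
    have hpre : (permEquiv σ) ⁻¹' (⋂ q ∈ s, A q) = ⋂ q ∈ s.map τ, A q := by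
      ext ω
      simp only [Set.mem_preimage, Set.mem_iInter, Finset.mem_map, forall_exists_index, and_imp,
        forall_apply_eq_imp_iff₂]
      rfl
    simp only [hpre]
    rw [hind.meas_biInter, hind.meas_biInter, Finset.prod_map]
    refine Finset.prod_congr rfl fun q _ => ?_
    rw [hval, hval]
    rfl
  · rw [MeasurableEquiv.map_apply, Set.preimage_univ]

lemma measure_eq_of_perm {μ : Measure (V → ℕ → Bool)} {p₀ p : ℝ} (hμ : IsLabelMeasure μ p₀ p)
    (σ : Equiv.Perm V) {E E' : Set (V → ℕ → Bool)}
    (h : ∀ ω, (fun v => ω (σ v)) ∈ E ↔ ω ∈ E') : μ E = μ E' := by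
  conv_lhs => rw [← map_permEquiv hμ σ, MeasurableEquiv.map_apply]
  congr 1
  ext ω
  exact h ω

/-- In an `r`-regular graph of girth `≥ g`, for `2i < g − 3`, the
probabilities of the basic one- and two-vertex colour events do not depend on the choice
of the vertex `u`, of the neighbour `v` of `u`, nor (for the last event) of a second
neighbour `w ≠ v` of `u`. -/
theorem colour_event_probabilities_independent_of_vertex
    [Fintype V] (r g : ℕ) (G : SimpleGraph V)
    (hreg : IsRegular G r) (hg : (g : ℕ∞) ≤ G.egirth)
    (p₀ p : ℝ) (hp₀ : p₀ ∈ Ioo (0 : ℝ) 1) (hp : p ∈ Ioo (0 : ℝ) 1)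
    (μ : Measure (V → ℕ → Bool)) (hμ : IsLabelMeasure μ p₀ p)
    (i : ℕ) (hi : 2 * i < g - 3) :
    (∀ u v u' v' : V, G.Adj u v → G.Adj u' v' →
      μ (WEv G i u) = μ (WEv G i u') ∧
      μ (BEv G i u) = μ (BEv G i u') ∧
      μ (WEv G i u ∩ WEv G i v) = μ (WEv G i u' ∩ WEv G i v') ∧
      μ (BEv G i u ∩ WEv G i v) = μ (BEv G i u' ∩ WEv G i v') ∧
      μ (BEv G i u ∩ BEv G i v) = μ (BEv G i u' ∩ BEv G i v')) ∧
    (∀ u v w u' v' w' : V, G.Adj u v → G.Adj u w → v ≠ w →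
      G.Adj u' v' → G.Adj u' w' → v' ≠ w' →
      μ (BEv G i v ∩ BEv G i u ∩ RLeEv G i w)
        = μ (BEv G i v' ∩ BEv G i u' ∩ RLeEv G i w')) := by
  have hgi : ((2 * (i + 1) + 2 : ℕ) : ℕ∞) ≤ G.egirth :=
    le_trans (by exact_mod_cast (by omega)) hg
  constructor
  · intro u v u' v' huv huv'
    obtain ⟨σ, hσ⟩ := exists_locIso hreg huv huv' huv huv' (by simp) (i + 1) hgi
    have hW : ∀ x ∈ EBall G u v 0, ∀ ω : V → ℕ → Bool,
        (fun y => ω (σ y)) ∈ WEv G i x ↔ ω ∈ WEv G i (σ x) :=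
      fun x hx ω => white_transfer hσ (labels ω) x hx
    have hB : ∀ x ∈ EBall G u v 0, ∀ ω : V → ℕ → Bool,
        (fun y => ω (σ y)) ∈ BEv G i x ↔ ω ∈ BEv G i (σ x) :=
      fun x hx ω => blue_transfer hσ (labels ω) x hx
    have hWu := hW u (Or.inl rfl)
    have hWv := hW v (Or.inr rfl)
    have hBu := hB u (Or.inl rfl)
    have hBv := hB v (Or.inr rfl)
    rw [hσ.1] at hWu hBu
    rw [hσ.2.1] at hWv hBv
    exact ⟨measure_eq_of_perm hμ σ hWu, measure_eq_of_perm hμ σ hBu,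
      measure_eq_of_perm hμ σ fun ω => and_congr (hWu ω) (hWv ω),
      measure_eq_of_perm hμ σ fun ω => and_congr (hBu ω) (hWv ω),
      measure_eq_of_perm hμ σ fun ω => and_congr (hBu ω) (hBv ω)⟩
  · intro u v w u' v' w' huv huw hvw huv' huw' hvw'
    obtain ⟨σ, hσ⟩ := exists_locIso hreg huv huv' huw huw' (by simp [hvw, hvw']) (i + 1) hgi
    have hBu : ∀ ω : V → ℕ → Bool, (fun y => ω (σ y)) ∈ BEv G i u ↔ ω ∈ BEv G i (σ u) :=
      fun ω => blue_transfer hσ (labels ω) u (Or.inl rfl)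
    have hBv : ∀ ω : V → ℕ → Bool, (fun y => ω (σ y)) ∈ BEv G i v ↔ ω ∈ BEv G i (σ v) :=
      fun ω => blue_transfer hσ (labels ω) v (Or.inr rfl)
    have hRw : ∀ ω : V → ℕ → Bool, (fun y => ω (σ y)) ∈ RLeEv G i w ↔ ω ∈ RLeEv G i (σ w) :=
      fun ω => relevantLe_transfer hσ (labels ω) w (Or.inr ⟨u, Or.inl rfl, huw⟩)
    rw [hσ.1] at hBu
    rw [hσ.2.1] at hBv
    rw [hσ.2.2.1] at hRw
    exact measure_eq_of_perm hμ σ fun ω => and_congr (and_congr (hBv ω) (hBu ω)) (hRw ω)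

end InducedForest
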